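/- arXiv:2406.03110 — 5 statements merged into one kernel-verified Lean document; each statement's English description precedes it below -/
import Mathlib

section
/- For every real exponent α with 0 < α < 1, every y ∈ ℝ with y ≠ 0, every t > 0, and every z ∈ ℝ, one has the bound |(4t·y·z + t²·z²)/((|y| + |y + t·z|)²)| · ∫₀¹ (1−s)·( |y| / ((1−s)|y| + s|y + t·z|) )^{1−α} ds ≤ 5/(α+1). -/
open Real intervalIntegral

/-!
With `w = y + t z`, the numerator of the prefactor is `w² + 2wy - 3y²`, whose absolute value is at
most `3 (|y| + |w|)²`, so the prefactor is at most `3`. Dropping the term `s |w|` from the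
denominator bounds the integrand by `(1 - s) ^ α`, whose integral over `[0, 1]` is `1 / (α + 1)`.
Hence the left-hand side is even at most `3 / (α + 1)`.
-/

lemma abs_prefactor_le_three (y w : ℝ) (hy : y ≠ 0) :
    |(w ^ 2 + 2 * w * y - 3 * y ^ 2) / (|y| + |w|) ^ 2| ≤ 3 := by
  have ha : 0 < |y| := abs_pos.mpr hy
  have hb : 0 ≤ |w| := abs_nonneg w
  have hpos : 0 < (|y| + |w|) ^ 2 := by positivity
  rw [abs_div, abs_of_pos hpos, div_le_iff₀ hpos, abs_le]
  have h1 := le_abs_self (w * y)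
  have h2 := neg_abs_le (w * y)
  rw [abs_mul] at h1 h2
  have h3 := sq_abs w
  have h4 := sq_abs y
  have h5 : 0 ≤ |w| * |y| := by positivity
  constructor <;> nlinarith [sq_nonneg w, sq_nonneg y]

lemma weighted_integrand_le {α a b s : ℝ} (hα0 : 0 < α) (hα1 : α < 1) (ha : 0 < a) (hb : 0 ≤ b)
    (hs0 : 0 ≤ s) (hs1 : s ≤ 1) :
    ‖(1 - s) * (a / ((1 - s) * a + s * b)) ^ (1 - α)‖ ≤ (1 - s) ^ α := by
  -- At `s = 1` both sides vanish, whatever the (possibly zero) denominator.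
  rcases hs1.eq_or_lt with rfl | hs
  · simp [Real.zero_rpow hα0.ne']
  have h1 : 0 < 1 - s := by linarith
  have hsb : 0 ≤ s * b := by positivity
  have hq : a / ((1 - s) * a + s * b) ≤ (1 - s)⁻¹ := by
    rw [div_le_iff₀ (by positivity), mul_add, inv_mul_cancel_left₀ h1.ne']
    have : 0 ≤ (1 - s)⁻¹ * (s * b) := by positivity
    linarith
  rw [Real.norm_of_nonneg (by positivity)]
  calc (1 - s) * (a / ((1 - s) * a + s * b)) ^ (1 - α)
      ≤ (1 - s) * ((1 - s)⁻¹) ^ (1 - α) := by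
        gcongr
    _ = (1 - s) ^ α := by
        rw [Real.inv_rpow h1.le, ← Real.rpow_neg h1.le]
        nth_rewrite 1 [← Real.rpow_one (1 - s)]
        rw [← Real.rpow_add h1]
        congr 1
        ring

theorem weighted_integral_bound_five
    (α : ℝ) (hα0 : 0 < α) (hα1 : α < 1)
    (y : ℝ) (hy : y ≠ 0) (t : ℝ) (ht : 0 < t) (z : ℝ) :
    |(4 * t * y * z + t ^ 2 * z ^ 2) / ((|y| + |y + t * z|) ^ 2)| *
        ∫ s in (0:ℝ)..1, (1 - s) * (|y| / ((1 - s) * |y| + s * |y + t * z|)) ^ (1 - α)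
      ≤ 5 / (α + 1) := by
  have hpre := abs_prefactor_le_three y (y + t * z) hy
  rw [show (y + t * z) ^ 2 + 2 * (y + t * z) * y - 3 * y ^ 2
    = 4 * t * y * z + t ^ 2 * z ^ 2 by ring] at hpre
  have hcont : Continuous fun s : ℝ => (1 - s) ^ α :=
    (continuous_const.sub continuous_id).rpow_const fun _ => Or.inr hα0.le
  have hval : ∫ s in (0:ℝ)..1, (1 - s) ^ α = 1 / (α + 1) := by
    rw [intervalIntegral.integral_comp_sub_left (fun u : ℝ => u ^ α) 1,
      integral_rpow (Or.inl (by linarith))]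
    simp [Real.zero_rpow (by linarith : α + 1 ≠ 0)]
  -- Bounding the norm by an integrable majorant avoids proving the integrand integrable.
  have hint : ∫ s in (0:ℝ)..1,
      (1 - s) * (|y| / ((1 - s) * |y| + s * |y + t * z|)) ^ (1 - α) ≤ 1 / (α + 1) := by
    rw [← hval]
    refine (Real.le_norm_self _).trans (intervalIntegral.norm_integral_le_of_norm_le zero_le_one
      (Filter.Eventually.of_forall fun s hs => ?_) (hcont.intervalIntegrable 0 1))
    exact weighted_integrand_le hα0 hα1 (abs_pos.mpr hy) (abs_nonneg _) hs.1.le hs.2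
  have hα : 0 < 1 / (α + 1) := by positivity
  calc _ ≤ |(4 * t * y * z + t ^ 2 * z ^ 2) / ((|y| + |y + t * z|) ^ 2)| * (1 / (α + 1)) :=
        mul_le_mul_of_nonneg_left hint (abs_nonneg _)
    _ ≤ 3 * (1 / (α + 1)) := mul_le_mul_of_nonneg_right hpre hα.le
    _ ≤ 5 * (1 / (α + 1)) := by linarith
    _ = 5 / (α + 1) := by ring
end

section
/- For every real exponent α with 0 < α < 1, every x ∈ ℝ with x ≠ 0, every t > 0, and every z ∈ ℝ, the second-order difference quotient Q := (1/t)·((|x + t·z|^{α+1} − |x|^{α+1})/t − (α+1)·sgn(x)·|x|^α·z) satisfies the uniform two-sided bound 0 ≤ Q ≤ (2 + 11α)·z²/|x|^{1−α}. -/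
/-!
Both sides are homogeneous in `x`. With `u = t * z / x`, the quotient `Q` equals
`(|x| ^ (α + 1) / t ^ 2) * (|1 + u| ^ (α + 1) - 1 - (α + 1) * u)`, and the upper bound equals
`(|x| ^ (α + 1) / t ^ 2) * ((2 + 11 * α) * u ^ 2)`; so it suffices to treat `x = 1`, `t = 1`.

There the lower bound is Bernoulli's inequality for the exponent `α + 1 ≥ 1` at `w = |1 + u|`,
together with `w ≥ 1 + u`. For the upper bound, write `w ^ (α + 1) = w * w ^ α` and apply
Bernoulli's inequality for the exponent `α ≤ 1`, which gives `w ^ (α + 1) ≤ w * (1 + α * (w - 1))`;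
the rest is a comparison of quadratics in `u` (it even yields the constant `2 + α`).
-/

lemma abs_one_add_rpow_lower {α : ℝ} (hα0 : 0 < α) (u : ℝ) :
    0 ≤ |1 + u| ^ (α + 1) - 1 - (α + 1) * u := by
  have h := one_add_mul_self_le_rpow_one_add (s := |1 + u| - 1)
    (by linarith [abs_nonneg (1 + u)]) (p := α + 1) (by linarith)
  rw [add_sub_cancel] at h
  nlinarith [le_abs_self (1 + u)]

lemma abs_one_add_rpow_upper {α : ℝ} (hα0 : 0 < α) (hα1 : α < 1) (u : ℝ) :
    |1 + u| ^ (α + 1) - 1 - (α + 1) * u ≤ (2 + 11 * α) * u ^ 2 := by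
  have hw := abs_nonneg (1 + u)
  have h := rpow_one_add_le_one_add_mul_self (s := |1 + u| - 1)
    (by linarith) (p := α) hα0.le hα1.le
  rw [add_sub_cancel] at h
  have h2 : |1 + u| ^ (α + 1) ≤ (1 + α * (|1 + u| - 1)) * |1 + u| := by
    rw [Real.rpow_add_one' hw (by linarith)]
    exact mul_le_mul_of_nonneg_right h hw
  have hu : 0 ≤ α * u ^ 2 := by positivity
  rcases le_total 0 (1 + u) with hs | hs
  · rw [abs_of_nonneg hs] at h2 ⊢
    nlinarith [sq_nonneg u]
  · rw [abs_of_nonpos hs] at h2 ⊢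
    -- Here the quadratic bound on the left side is `α * u ^ 2 - 2 * (1 - α) * (1 + u)`.
    nlinarith [sq_nonneg (u + 1), sq_nonneg u, mul_nonneg hα0.le (neg_nonneg.2 hs)]

theorem second_order_difference_quotient_two_sided_bound
    (α : ℝ) (hα0 : 0 < α) (hα1 : α < 1)
    (x : ℝ) (hx : x ≠ 0) (t : ℝ) (ht : 0 < t) (z : ℝ) :
    0 ≤ (1 / t) * ((|x + t * z| ^ (α + 1) - |x| ^ (α + 1)) / t
          - (α + 1) * Real.sign x * |x| ^ α * z) ∧
    (1 / t) * ((|x + t * z| ^ (α + 1) - |x| ^ (α + 1)) / t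
          - (α + 1) * Real.sign x * |x| ^ α * z)
      ≤ (2 + 11 * α) * z ^ 2 / |x| ^ (1 - α) := by
  have ha : 0 < |x| := abs_pos.2 hx
  have hA : 0 < |x| ^ (α + 1) := Real.rpow_pos_of_pos ha _
  have h1 : |x + t * z| ^ (α + 1) = |x| ^ (α + 1) * |1 + t * z / x| ^ (α + 1) := by
    rw [← Real.mul_rpow ha.le (abs_nonneg _), ← abs_mul]
    congr 2
    field_simp
  have h2 : Real.sign x * |x| ^ α = |x| ^ (α + 1) / x := by
    rw [Real.rpow_add_one ha.ne']
    rcases lt_or_gt_of_ne hx with h | h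
    · rw [Real.sign_of_neg h, abs_of_neg h]
      field_simp
    · rw [Real.sign_of_pos h, abs_of_pos h]
      field_simp
  have h3 : |x| ^ (1 - α) = x ^ 2 / |x| ^ (α + 1) := by
    rw [show 1 - α = 2 - (α + 1) by ring, Real.rpow_sub ha, Real.rpow_two, sq_abs]
  have hQ : (1 / t) * ((|x + t * z| ^ (α + 1) - |x| ^ (α + 1)) / t
          - (α + 1) * Real.sign x * |x| ^ α * z)
      = (|x| ^ (α + 1) / t ^ 2) *
        (|1 + t * z / x| ^ (α + 1) - 1 - (α + 1) * (t * z / x)) := by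
    rw [mul_assoc (α + 1), h2, h1]
    generalize |1 + t * z / x| ^ (α + 1) = W
    field_simp
  have hB : (2 + 11 * α) * z ^ 2 / |x| ^ (1 - α)
      = (|x| ^ (α + 1) / t ^ 2) * ((2 + 11 * α) * (t * z / x) ^ 2) := by
    rw [h3]
    field_simp
  rw [hQ, hB]
  have hc : 0 ≤ |x| ^ (α + 1) / t ^ 2 := by positivity
  exact ⟨mul_nonneg hc (abs_one_add_rpow_lower hα0 _),
    mul_le_mul_of_nonneg_left (abs_one_add_rpow_upper hα0 hα1 _) hc⟩
end

section
/- Let (Ω, μ) be a measure space, let α ∈ (0,1), and let y, z : Ω → ℝ be measurable functions such that z = 0 μ-almost everywhere on the set {y = 0} and such that the function ω ↦ z(ω)²/|y(ω)|^{1−α} is μ-integrable over the set {y ≠ 0}. Let (t_k) be a sequence of positive reals with t_k → 0. Then lim_{k→∞} (1/(α+1)) ∫_Ω (1/t_k)·((|y + t_k·z|^{α+1} − |y|^{α+1})/t_k − (α+1)·sgn(y)·|y|^α·z) dμ = (α/2) ∫_{{y ≠ 0}} z²/|y|^{1−α} dμ. -/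
open Real MeasureTheory Filter Topology

/-!
The proof is dominated convergence. Put `p = α + 1` and `g s = |1 + s| ^ p - 1 - p * s`. Where
`y ≠ 0`, homogeneity with `s = t * z / y` turns the integrand into
`|y| ^ p * g s / t ^ 2`, while `z ^ 2 / |y| ^ (1 - α) = |y| ^ p * s ^ 2 / t ^ 2`
(`integrand_eq`). Everything therefore reduces to two facts about one real variable:
* `0 ≤ g s ≤ (p / 2) * s ^ 2` for all `s` (`gap_nonneg`, `gap_le`), giving the dominating function;
* `g s / s ^ 2 → p * α / 2` as `s → 0` (`tendsto_gap`), giving the pointwise limit.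
Where `y = 0`, the function `z` vanishes almost everywhere, and so does the integrand.
-/

/-- Bernoulli's inequality, extended to all real `s` by the absolute value. -/
lemma gap_nonneg {p : ℝ} (hp1 : 1 < p) (s : ℝ) : 0 ≤ |1 + s| ^ p - 1 - p * s := by
  rcases le_total (-1) s with h | h
  · have := one_add_mul_self_le_rpow_one_add h hp1.le
    rw [abs_of_nonneg (by linarith)]
    linarith
  · have : 0 ≤ |1 + s| ^ p := by positivity
    nlinarith

/-- Bernoulli's inequality for the concave power `p / 2`, applied to
`|1 + s| ^ p = (1 + (2 * s + s ^ 2)) ^ (p / 2)`. -/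
lemma gap_le {p : ℝ} (hp1 : 1 < p) (hp2 : p < 2) (s : ℝ) :
    |1 + s| ^ p - 1 - p * s ≤ p / 2 * s ^ 2 := by
  have h := rpow_one_add_le_one_add_mul_self (s := 2 * s + s ^ 2) (p := p / 2)
    (by nlinarith [sq_nonneg (1 + s)]) (by linarith) (by linarith)
  have e : |1 + s| ^ p = (1 + (2 * s + s ^ 2)) ^ (p / 2) := by
    have : 1 + (2 * s + s ^ 2) = |1 + s| ^ (2 : ℝ) := by
      rw [Real.rpow_two, sq_abs]; ring
    rw [this, ← Real.rpow_mul (abs_nonneg _)]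
    congr 1; ring
  rw [e]; linarith

/-- Second-order Taylor expansion of `|1 + s| ^ (α + 1)` at `0`, via l'Hôpital's rule: the quotient
of derivatives is a multiple of the difference quotient of `(1 + s) ^ α`. -/
lemma tendsto_gap (α : ℝ) :
    Tendsto (fun s : ℝ => (|1 + s| ^ (α + 1) - 1 - (α + 1) * s) / s ^ 2) (𝓝[≠] 0)
      (𝓝 ((α + 1) * α / 2)) := by
  have hpos : ∀ᶠ s : ℝ in 𝓝[≠] 0, 0 < 1 + s := by
    apply eventually_nhdsWithin_of_eventually_nhds
    filter_upwards [lt_mem_nhds (show (-1 : ℝ) < 0 by norm_num)] with s hs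
    linarith
  have hd : ∀ (q s : ℝ), 0 < 1 + s →
      HasDerivAt (fun s : ℝ => (1 + s) ^ q) (q * (1 + s) ^ (q - 1)) s := by
    intro q s hs
    have := ((hasDerivAt_id s).const_add 1).rpow_const (p := q) (Or.inl hs.ne')
    simpa using this
  have key : Tendsto (fun s : ℝ => ((1 + s) ^ (α + 1) - 1 - (α + 1) * s) / s ^ 2) (𝓝[≠] 0)
      (𝓝 ((α + 1) * α / 2)) := by
    refine HasDerivAt.lhopital_zero_nhdsNE
      (f' := fun s => (α + 1) * (1 + s) ^ α - (α + 1)) (g' := fun s => 2 * s) ?_ ?_ ?_ ?_ ?_ ?_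
    · filter_upwards [hpos] with s hs
      have := ((hd (α + 1) s hs).sub_const 1).fun_sub ((hasDerivAt_id s).const_mul (α + 1))
      simpa using this
    · refine Eventually.of_forall fun s => ?_
      simpa using hasDerivAt_pow 2 s
    · filter_upwards [self_mem_nhdsWithin] with s hs
      simpa using hs
    · have : ContinuousAt (fun s : ℝ => (1 + s) ^ (α + 1) - 1 - (α + 1) * s) 0 :=
        (((hd (α + 1) 0 (by norm_num)).continuousAt).sub continuousAt_const).sub (by fun_prop)
      have h := this.tendsto
      simp only [add_zero, Real.one_rpow, mul_zero, sub_self] at h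
      exact h.mono_left nhdsWithin_le_nhds
    · have : ContinuousAt (fun s : ℝ => s ^ 2) 0 := by fun_prop
      have h := this.tendsto
      simp only [ne_eq, OfNat.ofNat_ne_zero, not_false_eq_true, zero_pow] at h
      exact h.mono_left nhdsWithin_le_nhds
    · have h := (hasDerivAt_iff_tendsto_slope.1 (hd α 0 (by norm_num))).const_mul ((α + 1) / 2)
      simp only [add_zero, Real.one_rpow, mul_one] at h
      convert h using 1
      · funext s
        simp only [slope_def_field, add_zero, Real.one_rpow, sub_zero]
        rw [div_mul_div_comm]
        congr 1; ring
      · congr 1; ring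
  refine key.congr' ?_
  filter_upwards [hpos] with s hs
  rw [abs_of_pos hs]

/-- Homogeneity: the integrand at a point with `y ≠ 0`, expressed through `s = t * z / y`. The
factor `|y| ^ (α + 1) / t ^ 2` times `s ^ 2` is `z ^ 2 / |y| ^ (1 - α)`. -/
lemma integrand_eq {α t y z : ℝ} (ht : 0 < t) (hy : y ≠ 0) :
    (1 / t) * ((|y + t * z| ^ (α + 1) - |y| ^ (α + 1)) / t
      - (α + 1) * Real.sign y * |y| ^ α * z)
    = |y| ^ (α + 1) / t ^ 2 *
        (|1 + t * z / y| ^ (α + 1) - 1 - (α + 1) * (t * z / y)) ∧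
    |y| ^ (α + 1) / t ^ 2 * (t * z / y) ^ 2 = z ^ 2 / |y| ^ (1 - α) := by
  have hy' : 0 < |y| := abs_pos.2 hy
  have e1 : |y + t * z| ^ (α + 1) = |y| ^ (α + 1) * |1 + t * z / y| ^ (α + 1) := by
    rw [← Real.mul_rpow (abs_nonneg _) (abs_nonneg _), ← abs_mul]
    congr 2; field_simp
  have e2 : |y| ^ (α + 1) = |y| ^ α * |y| := by rw [Real.rpow_add hy', Real.rpow_one]
  have e3 : Real.sign y * y = |y| := by
    rcases lt_or_gt_of_ne hy with h | h
    · rw [Real.sign_of_neg h, abs_of_neg h]; ring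
    · rw [Real.sign_of_pos h, abs_of_pos h]; ring
  have e4 : Real.sign y = |y| / y := by field_simp; exact e3
  constructor
  · rw [e1, e4, e2]
    field_simp
  · have e5 : |y| ^ (1 - α) * |y| ^ (α + 1) = y ^ 2 := by
      rw [← Real.rpow_add hy', ← sq_abs y, ← Real.rpow_two]
      congr 1; ring
    have h1 : 0 < |y| ^ (1 - α) := by positivity
    rw [eq_div_iff h1.ne']
    calc |y| ^ (α + 1) / t ^ 2 * (t * z / y) ^ 2 * |y| ^ (1 - α)
        = (|y| ^ (1 - α) * |y| ^ (α + 1)) / t ^ 2 * (t * z / y) ^ 2 := by ring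
      _ = z ^ 2 := by rw [e5]; field_simp

theorem limit_of_second_order_difference_quotients_fixed_direction
    {Ω : Type*} [MeasurableSpace Ω] (μ : Measure Ω)
    (α : ℝ) (hα0 : 0 < α) (hα1 : α < 1)
    (y z : Ω → ℝ) (hy : Measurable y) (hz : Measurable z)
    (hz0 : ∀ᵐ ω ∂μ, y ω = 0 → z ω = 0)
    (hint : IntegrableOn (fun ω => (z ω) ^ 2 / |y ω| ^ (1 - α)) {ω | y ω ≠ 0} μ)
    (t : ℕ → ℝ) (ht : ∀ k, 0 < t k) (htlim : Tendsto t atTop (𝓝 0)) :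
    Tendsto
      (fun k =>
        (1 / (α + 1)) *
          ∫ ω, (1 / t k) *
            ((|y ω + t k * z ω| ^ (α + 1) - |y ω| ^ (α + 1)) / t k
              - (α + 1) * Real.sign (y ω) * |y ω| ^ α * z ω) ∂μ)
      atTop
      (𝓝 ((α / 2) * ∫ ω in {ω | y ω ≠ 0}, (z ω) ^ 2 / |y ω| ^ (1 - α) ∂μ)) := by
  have hS : MeasurableSet {ω | y ω ≠ 0} := (hy (measurableSet_singleton 0)).compl
  have hsign : Measurable Real.sign := by
    unfold Real.sign
    exact Measurable.ite measurableSet_Iio measurable_const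
      (Measurable.ite measurableSet_Ioi measurable_const measurable_const)
  set F : Ω → ℝ := Set.indicator {ω | y ω ≠ 0} (fun ω => (z ω) ^ 2 / |y ω| ^ (1 - α)) with hF
  have hFint : Integrable F μ := (integrable_indicator_iff hS).2 hint
  have hlim := tendsto_integral_of_dominated_convergence (μ := μ)
    (F := fun k ω => (1 / t k) *
            ((|y ω + t k * z ω| ^ (α + 1) - |y ω| ^ (α + 1)) / t k
              - (α + 1) * Real.sign (y ω) * |y ω| ^ α * z ω))
    (f := fun ω => (α + 1) * α / 2 * F ω) (fun ω => (α + 1) / 2 * F ω)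
    (fun k => by
      have hs : Measurable fun ω => Real.sign (y ω) := hsign.comp hy
      have ha : Measurable fun ω => |y ω + t k * z ω| := (hy.add (hz.const_mul _)).abs
      have hb : Measurable fun ω => |y ω| := hy.abs
      exact Measurable.aestronglyMeasurable (by fun_prop))
    (hFint.const_mul _) ?_ ?_
  · have h2 := hlim.const_mul (1 / (α + 1))
    convert h2 using 2
    rw [integral_const_mul, hF, integral_indicator hS]
    field_simp
  · intro k
    filter_upwards [hz0] with ω hω
    by_cases h : y ω = 0
    · have h0 : (0 : ℝ) ^ (α + 1) = 0 := Real.zero_rpow (by linarith)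
      simp [hF, h, hω h, h0]
    · obtain ⟨e1, e2⟩ := integrand_eq (α := α) (z := z ω) (ht k) h
      have hFω : F ω = z ω ^ 2 / |y ω| ^ (1 - α) := Set.indicator_of_mem h _
      have hc : 0 ≤ |y ω| ^ (α + 1) / t k ^ 2 := by positivity
      rw [e1, hFω, ← e2, Real.norm_of_nonneg
        (mul_nonneg hc (gap_nonneg (by linarith) _))]
      have := mul_le_mul_of_nonneg_left
        (gap_le (p := α + 1) (by linarith) (by linarith) (t k * z ω / y ω)) hc
      linarith
  · filter_upwards [hz0] with ω hω
    by_cases hzω : z ω = 0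
    · have hFω : F ω = 0 := by simp [hF, Set.indicator, hzω]
      simp [hFω, hzω]
    · have h : y ω ≠ 0 := fun h => hzω (hω h)
      have hFω : F ω = z ω ^ 2 / |y ω| ^ (1 - α) := Set.indicator_of_mem h _
      have hs : Tendsto (fun k => t k * z ω / y ω) atTop (𝓝[≠] 0) := by
        refine tendsto_nhdsWithin_iff.2 ⟨?_, Eventually.of_forall fun k => ?_⟩
        · simpa using (htlim.mul_const (z ω)).div_const (y ω)
        · exact div_ne_zero (mul_ne_zero (ht k).ne' hzω) h
      have h3 := ((tendsto_gap α).comp hs).mul_const (F ω)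
      refine h3.congr fun k => ?_
      obtain ⟨e1, e2⟩ := integrand_eq (α := α) (z := z ω) (ht k) h
      have hne : t k * z ω / y ω ≠ 0 := div_ne_zero (mul_ne_zero (ht k).ne' hzω) h
      rw [e1, hFω, ← e2, Function.comp_apply]
      generalize t k * z ω / y ω = s at hne
      field_simp
end

section
/- Let (Ω, μ) be a finite measure space, let α ∈ (0,1), let y : Ω → ℝ be measurable, let (t_k) be a sequence of positive reals with t_k → 0, and let δ_k, δ : Ω → ℝ be measurable functions with δ_k → δ in L²(μ). For each k define I_k := ∫_Ω (1/t_k)·((|y + t_k·δ_k|^{α+1} − |y|^{α+1})/t_k − (α+1)·sgn(y)·|y|^α·δ_k) dμ ∈ [0, ∞] (the integrand is nonnegative), and assume that there is a constant M with I_k ≤ M for all k. Then: (i) δ = 0 μ-almost everywhere on the set {y = 0}, and (ii) liminf_{k→∞} (1/(α+1))·I_k ≥ (α/2) ∫_{{y ≠ 0}} δ²/|y|^{1−α} dμ; in particular the integral on the right-hand side is finite. -/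
open Real MeasureTheory Filter Topology ENNReal

/-! The integrand of `I k` is `1 / t k ^ 2` times the first-order Taylor remainder of
`h x = |x| ^ (α + 1)` at `y` with increment `t k * δk k`. Wherever `δk k ω → δ ω`, it converges
to half the second derivative of `h` at `y ω` times `δ ω ^ 2`, that is
`(α + 1) * α / 2 * δ ω ^ 2 / |y ω| ^ (1 - α)`, if `y ω ≠ 0`
(`tendsto_quotient_of_ne_zero`), and it equals `t k ^ (α - 1) * |δk k ω| ^ (α + 1)` if `y ω = 0`,
which tends to `∞` unless `δ ω = 0` (`tendsto_quotient_of_eq_zero`).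

Pass to a subsequence along which `I` converges to its lower limit, and, since `L²` convergence
implies convergence in measure, to a further one along which `δk → δ` almost everywhere.
Fatou's lemma then bounds `∫ G` by `liminf I ≤ M < ∞`, where `G` is the pointwise limit above,
set to `∞` on `{y = 0, δ ≠ 0}` and to `0` on `{y = 0, δ = 0}`. All three claims follow:
`G` is finite almost everywhere, and its integral dominates the one over `{y ≠ 0}`. -/

/-- Second-order Taylor expansion with Peano remainder of `x ↦ |x| ^ (α + 1)` at `a > 0`. -/
lemma isLittleO_taylor_abs_rpow (α : ℝ) {a : ℝ} (ha : 0 < a) :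
    (fun s : ℝ => |a + s| ^ (α + 1) - a ^ (α + 1) - (α + 1) * a ^ α * s
        - (α + 1) * α / 2 * a ^ (α - 1) * s ^ 2) =o[𝓝 0] fun s => s ^ 2 := by
  have hpos : ∀ᶠ s : ℝ in 𝓝 0, 0 < a + s := by
    have : Tendsto (fun s : ℝ => a + s) (𝓝 0) (𝓝 (a + 0)) :=
      (continuous_const.add continuous_id).tendsto 0
    exact this.eventually (lt_mem_nhds (by simpa using ha))
  have hpow : ∀ (p s : ℝ), 0 < a + s →
      HasDerivAt (fun s : ℝ => (a + s) ^ p) (p * (a + s) ^ (p - 1)) s := by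
    intro p s hs
    have h1 : HasDerivAt (fun s : ℝ => a + s) 1 s := (hasDerivAt_id s).const_add a
    simpa using h1.rpow_const (p := p) (Or.inl hs.ne')
  have hsq : Tendsto (fun s : ℝ => s ^ 2) (𝓝 0) (𝓝 0) := by
    simpa using (continuous_pow 2 : Continuous fun s : ℝ => s ^ 2).tendsto 0
  have hmain : Tendsto (fun s : ℝ => ((a + s) ^ (α + 1) - a ^ (α + 1) - (α + 1) * a ^ α * s
        - (α + 1) * α / 2 * a ^ (α - 1) * s ^ 2) / s ^ 2) (𝓝[≠] 0) (𝓝 0) := by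
    apply HasDerivAt.lhopital_zero_nhdsNE
      (f' := fun s => (α + 1) * (a + s) ^ α - (α + 1) * a ^ α
        - (α + 1) * α / 2 * a ^ (α - 1) * (2 * s)) (g' := fun s => 2 * s)
    · filter_upwards [eventually_nhdsWithin_of_eventually_nhds hpos] with s hs
      have h1 := hpow (α + 1) s hs
      have h2 : HasDerivAt (fun s : ℝ => (α + 1) * a ^ α * s) ((α + 1) * a ^ α) s := by
        simpa using (hasDerivAt_id s).const_mul ((α + 1) * a ^ α)
      have h3 : HasDerivAt (fun s : ℝ => (α + 1) * α / 2 * a ^ (α - 1) * s ^ 2)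
          ((α + 1) * α / 2 * a ^ (α - 1) * (2 * s)) s := by
        simpa using (hasDerivAt_pow 2 s).const_mul ((α + 1) * α / 2 * a ^ (α - 1))
      rw [add_sub_cancel_right] at h1
      exact ((h1.sub_const (a ^ (α + 1))).sub h2).sub h3
    · exact Eventually.of_forall fun s => by simpa using hasDerivAt_pow 2 s
    · filter_upwards [self_mem_nhdsWithin] with s hs
      simpa using hs
    · apply tendsto_nhdsWithin_of_tendsto_nhds
      have hc : ContinuousAt (fun s : ℝ => (a + s) ^ (α + 1)) 0 :=
        (hpow (α + 1) 0 (by simpa using ha)).continuousAt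
      have hc' : ContinuousAt (fun s : ℝ => (a + s) ^ (α + 1) - a ^ (α + 1) - (α + 1) * a ^ α * s
        - (α + 1) * α / 2 * a ^ (α - 1) * s ^ 2) 0 := by fun_prop
      simpa [ContinuousAt] using hc'
    · exact tendsto_nhdsWithin_of_tendsto_nhds hsq
    · -- The quotient of derivatives is `(α + 1) / 2` times the difference between the
      -- slope of `x ↦ x ^ α` at `a` and its limit.
      have h0 := (hpow α 0 (by simpa using ha))
      have hslope := hasDerivAt_iff_tendsto_slope_zero.1 h0
      have h1 := ((hslope.sub_const (α * (a + 0) ^ (α - 1))).const_mul ((α + 1) / 2))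
      simp only [sub_self, mul_zero] at h1
      refine h1.congr' ?_
      filter_upwards [self_mem_nhdsWithin] with s hs
      have hs : s ≠ 0 := hs
      simp only [zero_add, add_zero, smul_eq_mul]
      field_simp
  have hmain' : Tendsto (fun s : ℝ => (|a + s| ^ (α + 1) - a ^ (α + 1) - (α + 1) * a ^ α * s
        - (α + 1) * α / 2 * a ^ (α - 1) * s ^ 2) / s ^ 2) (𝓝[≠] 0) (𝓝 0) := by
    refine hmain.congr' ?_
    filter_upwards [eventually_nhdsWithin_of_eventually_nhds hpos] with s hs
    rw [abs_of_pos hs]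
  rw [← nhdsNE_sup_pure (0 : ℝ), Asymptotics.isLittleO_sup]
  constructor
  · rw [Asymptotics.isLittleO_iff_tendsto']
    · exact hmain'
    · filter_upwards [self_mem_nhdsWithin] with s hs h
      exact absurd (pow_eq_zero_iff (two_ne_zero) |>.1 h) hs
  · rw [Asymptotics.isLittleO_pure]
    simp [abs_of_pos ha]

/-- Pointwise limit of the integrand where `y ≠ 0`. -/
lemma tendsto_quotient_of_ne_zero (α : ℝ) {y : ℝ} (hy : y ≠ 0)
    {t d : ℕ → ℝ} {e : ℝ} (ht : ∀ k, 0 < t k) (htlim : Tendsto t atTop (𝓝 0))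
    (hd : Tendsto d atTop (𝓝 e)) :
    Tendsto (fun k => (1 / t k) * ((|y + t k * d k| ^ (α + 1) - |y| ^ (α + 1)) / t k
        - (α + 1) * Real.sign y * |y| ^ α * d k)) atTop
      (𝓝 ((α + 1) * (α / 2 * (e ^ 2 / |y| ^ (1 - α))))) := by
  have ha : 0 < |y| := abs_pos.2 hy
  -- The sign `σ` of `y` reduces the expansion at `y` to the one at `|y|`.
  obtain ⟨σ, hσ, hσ2, hσy⟩ : ∃ σ : ℝ, Real.sign y = σ ∧ σ ^ 2 = 1 ∧
      ∀ s, |y + s| = |(|y| + σ * s)| := by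
    rcases hy.lt_or_gt with h | h
    · refine ⟨-1, Real.sign_of_neg h, by norm_num, fun s => ?_⟩
      rw [abs_of_neg h, ← abs_neg]; congr 1; ring
    · exact ⟨1, Real.sign_of_pos h, by norm_num, fun s => by rw [abs_of_pos h, one_mul]⟩
  have hs : Tendsto (fun k => σ * (t k * d k)) atTop (𝓝 0) := by
    simpa using (htlim.mul hd).const_mul σ
  have ho := (isLittleO_taylor_abs_rpow α ha).comp_tendsto hs
  have hO : (fun k => (σ * (t k * d k)) ^ 2) =O[atTop] fun k => t k ^ 2 := by
    have h1 : (fun k => d k ^ 2) =O[atTop] fun _ => (1 : ℝ) := (hd.pow 2).isBigO_one ℝ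
    have h2 := (Asymptotics.isBigO_refl (fun k => t k ^ 2) atTop).mul h1
    refine (h2.congr_left fun k => ?_).congr_right fun k => mul_one _
    rw [mul_pow, hσ2]; ring
  have hq := (ho.trans_isBigO hO).tendsto_div_nhds_zero
  have hlim := hq.add ((hd.pow 2).const_mul ((α + 1) * α / 2 * |y| ^ (α - 1)))
  have hexp : |y| ^ (α - 1) = (|y| ^ (1 - α))⁻¹ := by
    rw [← Real.rpow_neg ha.le]; congr 1; ring
  convert hlim using 2 with k
  · have htk := (ht k).ne'
    simp only [Function.comp, hσy, hσ]
    rw [mul_pow σ, hσ2]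
    field_simp
    ring
  · rw [hexp, div_eq_mul_inv]; ring

/-- Where `y = 0`, the integrand blows up unless `δ = 0`. -/
lemma tendsto_quotient_of_eq_zero {α : ℝ} (hα0 : 0 < α) (hα1 : α < 1)
    {t d : ℕ → ℝ} {e : ℝ} (he : e ≠ 0) (ht : ∀ k, 0 < t k) (htlim : Tendsto t atTop (𝓝 0))
    (hd : Tendsto d atTop (𝓝 e)) :
    Tendsto (fun k => (1 / t k) * ((|0 + t k * d k| ^ (α + 1) - |(0 : ℝ)| ^ (α + 1)) / t k
        - (α + 1) * Real.sign 0 * |(0 : ℝ)| ^ α * d k)) atTop atTop := by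
  have h1 : Tendsto (fun k => |d k| ^ (α + 1)) atTop (𝓝 (|e| ^ (α + 1))) :=
    hd.abs.rpow_const (Or.inr (by linarith))
  have htw : Tendsto t atTop (𝓝[>] 0) :=
    tendsto_nhdsWithin_iff.2 ⟨htlim, Eventually.of_forall ht⟩
  have h2 : Tendsto (fun k => t k ^ (α - 1)) atTop atTop :=
    (tendsto_rpow_neg_nhdsGT_zero (by linarith)).comp htw
  refine (h2.atTop_mul_pos (Real.rpow_pos_of_pos (abs_pos.2 he) _) h1).congr fun k => ?_
  have htk := ht k
  rw [zero_add, abs_mul, abs_of_pos htk, Real.mul_rpow htk.le (abs_nonneg _), abs_zero,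
    Real.zero_rpow (by linarith), Real.sign_zero, Real.rpow_sub_one htk.ne',
    Real.rpow_add_one htk.ne']
  field_simp
  ring

lemma measurable_real_sign : Measurable Real.sign := by
  unfold Real.sign
  exact Measurable.ite measurableSet_Iio measurable_const
    (Measurable.ite measurableSet_Ioi measurable_const measurable_const)

/-- `L²` convergence, expressed by Lebesgue integrals, implies convergence in measure. -/
lemma tendstoInMeasure_of_lintegral_sq {Ω : Type*} [MeasurableSpace Ω] {μ : Measure Ω}
    {f : ℕ → Ω → ℝ} {g : Ω → ℝ} (hf : ∀ k, Measurable (f k)) (hg : Measurable g)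
    (h : Tendsto (fun k => ∫⁻ ω, ENNReal.ofReal ((f k ω - g ω) ^ 2) ∂μ) atTop (𝓝 0)) :
    TendstoInMeasure μ f atTop g := by
  refine tendstoInMeasure_of_tendsto_eLpNorm (p := 2) two_ne_zero
    (fun k => (hf k).aestronglyMeasurable) hg.aestronglyMeasurable ?_
  have h2 := (ENNReal.continuous_rpow_const (y := (1 / 2 : ℝ))).tendsto 0 |>.comp h
  rw [ENNReal.zero_rpow_of_pos (by norm_num)] at h2
  refine h2.congr fun k => ?_
  rw [eLpNorm_eq_lintegral_rpow_enorm_toReal two_ne_zero ENNReal.ofNat_ne_top]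
  simp only [Function.comp, ENNReal.toReal_ofNat, Pi.sub_apply]
  congr 1
  refine lintegral_congr fun ω => ?_
  rw [← ofReal_norm, ENNReal.ofReal_rpow_of_nonneg (norm_nonneg _) (by norm_num)]
  simp

theorem behavior_of_alpha_delta_terms
    {Ω : Type*} [MeasurableSpace Ω] (μ : Measure Ω) [IsFiniteMeasure μ]
    (α : ℝ) (hα0 : 0 < α) (hα1 : α < 1)
    (y : Ω → ℝ) (hy : Measurable y)
    (t : ℕ → ℝ) (ht : ∀ k, 0 < t k) (htlim : Tendsto t atTop (𝓝 0))
    (δk : ℕ → Ω → ℝ) (δ : Ω → ℝ)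
    (hδk : ∀ k, Measurable (δk k)) (hδ : Measurable δ)
    (hL2 : Tendsto (fun k => ∫⁻ ω, ENNReal.ofReal ((δk k ω - δ ω) ^ 2) ∂μ)
      atTop (𝓝 0))
    (I : ℕ → ℝ≥0∞)
    (hI : ∀ k, I k = ∫⁻ ω, ENNReal.ofReal
      ((1 / t k) * ((|y ω + t k * δk k ω| ^ (α + 1) - |y ω| ^ (α + 1)) / t k
        - (α + 1) * Real.sign (y ω) * |y ω| ^ α * δk k ω)) ∂μ)
    (M : ℝ≥0∞) (hM : M ≠ ⊤) (hIM : ∀ k, I k ≤ M) :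
    (∀ᵐ ω ∂μ, y ω = 0 → δ ω = 0) ∧
    Filter.atTop.liminf (fun k => ENNReal.ofReal (1 / (α + 1)) * I k)
      ≥ ENNReal.ofReal (α / 2) *
        ∫⁻ ω in {ω | y ω ≠ 0}, ENNReal.ofReal ((δ ω) ^ 2 / |y ω| ^ (1 - α)) ∂μ ∧
    (∫⁻ ω in {ω | y ω ≠ 0}, ENNReal.ofReal ((δ ω) ^ 2 / |y ω| ^ (1 - α)) ∂μ) < ⊤ := by
  classical
  have hyset : MeasurableSet {ω | y ω ≠ 0} := (hy (measurableSet_singleton 0)).compl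
  have hy0 : MeasurableSet {ω | y ω = 0} := hy (measurableSet_singleton 0)
  have hδ0 : MeasurableSet {ω | δ ω = 0} := hδ (measurableSet_singleton 0)
  set F : ℕ → Ω → ℝ≥0∞ := fun k ω => ENNReal.ofReal
      ((1 / t k) * ((|y ω + t k * δk k ω| ^ (α + 1) - |y ω| ^ (α + 1)) / t k
        - (α + 1) * Real.sign (y ω) * |y ω| ^ α * δk k ω)) with hF
  have hFm : ∀ k, Measurable (F k) := by
    intro k
    have h1 := hδk k
    have h2 : Measurable fun ω => Real.sign (y ω) := measurable_real_sign.comp hy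
    have h3 : Measurable fun ω => |y ω| := hy.abs
    have h4 : Measurable fun ω => |y ω + t k * δk k ω| := (hy.add (h1.const_mul _)).abs
    simp only [hF]
    fun_prop
  set D : Ω → ℝ≥0∞ := fun ω => ENNReal.ofReal (δ ω ^ 2 / |y ω| ^ (1 - α)) with hD
  have hDm : Measurable D := by
    have h3 : Measurable fun ω => |y ω| := hy.abs
    simp only [hD]
    fun_prop
  set G : Ω → ℝ≥0∞ := fun ω => if y ω = 0 then (if δ ω = 0 then 0 else ⊤)
    else ENNReal.ofReal (α + 1) * (ENNReal.ofReal (α / 2) * D ω) with hG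
  have hGm : Measurable G :=
    Measurable.ite hy0 (Measurable.ite hδ0 measurable_const measurable_const)
      ((hDm.const_mul _).const_mul _)
  obtain ⟨φ, hφI, hφ⟩ : ∃ φ : ℕ → ℕ, Tendsto (fun n => I (φ n)) atTop (𝓝 (liminf I atTop)) ∧
      Tendsto φ atTop atTop := exists_seq_tendsto_liminf
  obtain ⟨ψ, hψ, hae⟩ :=
    (tendstoInMeasure_of_lintegral_sq (fun n => hδk (φ n)) hδ (hL2.comp hφ)).exists_seq_tendsto_ae
  have hψ' := hψ.tendsto_atTop
  have htψ : Tendsto (fun n => t (φ (ψ n))) atTop (𝓝 0) := htlim.comp (hφ.comp hψ')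
  have hGF : ∀ᵐ ω ∂μ, G ω ≤ liminf (fun n => F (φ (ψ n)) ω) atTop := by
    filter_upwards [hae] with ω hω
    by_cases hyω : y ω = 0
    · by_cases hδω : δ ω = 0
      · simp [hG, hyω, hδω]
      · have h := ENNReal.tendsto_ofReal_nhds_top.2
          (tendsto_quotient_of_eq_zero hα0 hα1 hδω (fun n => ht (φ (ψ n))) htψ hω)
        have h' : Tendsto (fun n => F (φ (ψ n)) ω) atTop (𝓝 ⊤) := by
          simp only [hF, hyω]; exact h
        rw [h'.liminf_eq]; exact le_top
    · have h := ENNReal.tendsto_ofReal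
          (tendsto_quotient_of_ne_zero α hyω (fun n => ht (φ (ψ n))) htψ hω)
      rw [Tendsto.liminf_eq h]
      simp only [hG, hyω, if_false, hD]
      rw [ENNReal.ofReal_mul (by linarith), ENNReal.ofReal_mul (by linarith)]
  have hGI : ∫⁻ ω, G ω ∂μ ≤ liminf I atTop := by
    calc ∫⁻ ω, G ω ∂μ ≤ ∫⁻ ω, liminf (fun n => F (φ (ψ n)) ω) atTop ∂μ := lintegral_mono_ae hGF
      _ ≤ liminf (fun n => ∫⁻ ω, F (φ (ψ n)) ω ∂μ) atTop :=
        lintegral_liminf_le fun n => hFm _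
      _ = liminf I atTop := by
        rw [← (hφI.comp hψ').liminf_eq]
        simp only [Function.comp_def, hI, hF]
  have hGfin : ∫⁻ ω, G ω ∂μ < ⊤ := by
    refine (hGI.trans ?_).trans_lt hM.lt_top
    exact (liminf_le_limsup).trans (limsup_le_of_le (h := Eventually.of_forall hIM))
  have hDG : ENNReal.ofReal (α + 1) * (ENNReal.ofReal (α / 2) * ∫⁻ ω in {ω | y ω ≠ 0}, D ω ∂μ)
      ≤ ∫⁻ ω, G ω ∂μ := by
    rw [← lintegral_const_mul _ hDm, ← lintegral_const_mul _ (hDm.const_mul _)]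
    refine le_trans (le_of_eq ?_) (setLIntegral_le_lintegral {ω | y ω ≠ 0} G)
    refine setLIntegral_congr_fun hyset fun ω hω => ?_
    have hω : y ω ≠ 0 := hω
    simp [hG, hω]
  refine ⟨?_, ?_, ?_⟩
  · filter_upwards [ae_lt_top hGm hGfin.ne] with ω hω hyω
    by_contra hδω
    simp [hG, hyω, hδω] at hω
  · rw [ge_iff_le, ENNReal.liminf_const_mul_of_ne_top ENNReal.ofReal_ne_top]
    refine le_trans (le_of_eq ?_) (mul_le_mul_right (hDG.trans hGI) _)
    rw [← mul_assoc, ← ENNReal.ofReal_mul (by positivity),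
      one_div_mul_cancel (by linarith), ENNReal.ofReal_one, one_mul]
  · rw [← mul_assoc, ← ENNReal.ofReal_mul (by linarith)] at hDG
    exact ENNReal.lt_top_of_mul_ne_top_right (hDG.trans_lt hGfin).ne
      (ENNReal.ofReal_pos.2 (by positivity)).ne'
end

section
/- Let X be a real Hilbert space, let Y and Z be real normed vector spaces, let ι : X → Y be a compact continuous linear operator, let F : Y → Z be Lipschitz continuous, and let u ∈ X. Assume that F is Gâteaux differentiable at ι(u), i.e., there exists a continuous linear operator D : Y → Z such that for every w ∈ Y the difference quotients (F(ι(u) + τ·w) − F(ι(u)))/τ converge in Z to D(w) as τ → 0+. Then the composition F ∘ ι : X → Z is Fréchet differentiable at u with Fréchet derivative D ∘ ι. -/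
/-!
The image of the unit sphere of `X` under `ι` is totally bounded in `Y`. The one-sided directional
difference quotients therefore converge uniformly on it: finitely many directions forming a `δ`-net
are handled by Gâteaux differentiability, and passing from a direction `v` to a nearby net
point `w` costs at most `(L + ‖D‖) δ`, uniformly in the step `τ`, by the Lipschitz bound on `F` and
boundedness of `D`. Writing an increment as `h = ‖h‖ • (h / ‖h‖)` turns this into the Fréchet
estimate.
-/

open Filter Topology

theorem frechet_via_compactness_lipschitz_gateaux
    {X Y Z : Type*}
    [NormedAddCommGroup X] [InnerProductSpace ℝ X] [CompleteSpace X]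
    [NormedAddCommGroup Y] [NormedSpace ℝ Y]
    [NormedAddCommGroup Z] [NormedSpace ℝ Z]
    (ι : X →L[ℝ] Y)
    (hcompact : ∀ s : Set X, Bornology.IsBounded s → IsCompact (closure (ι '' s)))
    (F : Y → Z)
    (hF : ∃ L : ℝ, 0 ≤ L ∧ ∀ y₁ y₂ : Y, ‖F y₁ - F y₂‖ ≤ L * ‖y₁ - y₂‖)
    (u : X) (D : Y →L[ℝ] Z)
    (hGateaux : ∀ w : Y,
      Tendsto (fun τ : ℝ => τ⁻¹ • (F (ι u + τ • w) - F (ι u)))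
        (𝓝[>] (0:ℝ)) (𝓝 (D w))) :
    HasFDerivAt (fun x => F (ι x)) (D.comp ι) u := by
  obtain ⟨L, hL, hLip⟩ := hF
  rw [hasFDerivAt_iff_isLittleO_nhds_zero, Asymptotics.isLittleO_iff]
  intro ε hε
  set C : ℝ := L + ‖D‖ + 1 with hC
  have hCpos : 0 < C := by positivity
  -- The radius for which the transfer error `(L + ‖D‖) δ` is at most `ε / 2`.
  set δ : ℝ := ε / 2 / C with hδ
  have hδpos : 0 < δ := by positivity
  have hCδ : C * δ = ε / 2 := by rw [hδ]; field_simp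
  have htb : TotallyBounded (ι '' Metric.sphere (0 : X) 1) :=
    (hcompact _ Metric.isBounded_sphere).totallyBounded.subset subset_closure
  obtain ⟨t, htfin, htcover⟩ := Metric.totallyBounded_iff.mp htb δ hδpos
  have hunif : ∀ᶠ τ in 𝓝[>] (0 : ℝ), ∀ w ∈ t,
      ‖τ⁻¹ • (F (ι u + τ • w) - F (ι u)) - D w‖ < ε / 2 := by
    rw [eventually_all_finite htfin]
    intro w _
    have h := Metric.tendsto_nhds.mp (hGateaux w) (ε / 2) (half_pos hε)
    simpa only [dist_eq_norm] using h
  obtain ⟨r, hr, hrt⟩ := Metric.eventually_nhds_iff.mp (eventually_nhdsWithin_iff.mp hunif)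
  filter_upwards [Metric.ball_mem_nhds (0 : X) hr] with h hh
  rcases eq_or_ne h 0 with rfl | hne
  · simp
  have hτ : 0 < ‖h‖ := norm_pos_iff.mpr hne
  set τ : ℝ := ‖h‖ with hτdef
  set v : Y := ι (τ⁻¹ • h) with hv
  have hιh : ι h = τ • v := by
    rw [hv, map_smul, smul_smul, mul_inv_cancel₀ hτ.ne', one_smul]
  have hvmem : v ∈ ι '' Metric.sphere (0 : X) 1 := by
    refine ⟨τ⁻¹ • h, ?_, rfl⟩
    rw [mem_sphere_zero_iff_norm, norm_smul, norm_inv, Real.norm_of_nonneg hτ.le, ← hτdef,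
      inv_mul_cancel₀ hτ.ne']
  obtain ⟨w, hwt, hvw⟩ := Set.mem_iUnion₂.mp (htcover hvmem)
  have hvw' : ‖v - w‖ ≤ δ := by
    rw [← dist_eq_norm]; exact (Metric.mem_ball.mp hvw).le
  have hq : ‖τ⁻¹ • (F (ι u + τ • w) - F (ι u)) - D w‖ < ε / 2 := by
    refine hrt ?_ hτ w hwt
    rw [dist_zero_right, Real.norm_of_nonneg hτ.le]
    exact mem_ball_zero_iff.mp hh
  have h1 : ‖F (ι u + τ • v) - F (ι u + τ • w)‖ ≤ L * (τ * δ) := by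
    refine (hLip _ _).trans (mul_le_mul_of_nonneg_left ?_ hL)
    rw [add_sub_add_left_eq_sub, ← smul_sub, norm_smul, Real.norm_of_nonneg hτ.le]
    exact mul_le_mul_of_nonneg_left hvw' hτ.le
  have h2 : ‖F (ι u + τ • w) - F (ι u) - τ • D w‖ ≤ τ * (ε / 2) := by
    have e : F (ι u + τ • w) - F (ι u) - τ • D w
        = τ • (τ⁻¹ • (F (ι u + τ • w) - F (ι u)) - D w) := by
      rw [smul_sub, smul_smul, mul_inv_cancel₀ hτ.ne', one_smul]
    rw [e, norm_smul, Real.norm_of_nonneg hτ.le]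
    exact mul_le_mul_of_nonneg_left hq.le hτ.le
  have h3 : ‖τ • D (w - v)‖ ≤ τ * (‖D‖ * δ) := by
    rw [norm_smul, Real.norm_of_nonneg hτ.le]
    refine mul_le_mul_of_nonneg_left ((D.le_opNorm _).trans ?_) hτ.le
    rw [norm_sub_rev]
    exact mul_le_mul_of_nonneg_left hvw' (norm_nonneg _)
  have hsplit : F (ι (u + h)) - F (ι u) - (D.comp ι) h
      = (F (ι u + τ • v) - F (ι u + τ • w))
        + (F (ι u + τ • w) - F (ι u) - τ • D w) + τ • D (w - v) := by
    rw [map_add, ContinuousLinearMap.comp_apply, hιh, map_smul, map_sub, smul_sub]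
    abel
  calc ‖F (ι (u + h)) - F (ι u) - (D.comp ι) h‖
      ≤ L * (τ * δ) + τ * (ε / 2) + τ * (‖D‖ * δ) := by
        rw [hsplit]; exact norm_add₃_le.trans (by gcongr)
    _ = τ * (C * δ - δ + ε / 2) := by rw [hC]; ring
    _ ≤ τ * ε := mul_le_mul_of_nonneg_left (by linarith) hτ.le
    _ = ε * τ := mul_comm _ _
end
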